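/- Let m ≥ n ≥ 1 and let A ∈ ℂ^{m×n} be column-orthonormal, and set K = AAᴴ. Then Σ_{S ⊆ [m], |S| = n} det(K_S) = 1; that is, the principal minors of order n of K form a probability distribution on the n-element subsets of [m]. -/

import Mathlib

open Matrix

/-- The principal submatrix of an `m × m` matrix with rows and columns indexed by
a subset `S ⊆ [m]` with `|S| = k`. -/
noncomputable def principalSubmatrix {m k : ℕ} (K : Matrix (Fin m) (Fin m) ℂ)
    (S : Finset (Fin m)) (hS : S.card = k) : Matrix (Fin k) (Fin k) ℂ :=
  K.submatrix (fun i => ((S.orderIsoOfFin hS i : {x // x ∈ S}) : Fin m))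
    (fun i => ((S.orderIsoOfFin hS i : {x // x ∈ S}) : Fin m))

/-! The sum of the principal minors of order `k` of `M` is the coefficient of `X ^ k` in
`det (1 + X M)`. Since `det (1 + X A B) = det (1 + X B A)`, these sums agree for `A B` and `B A`.
For `B A` of size `n` and `k = n` the only principal minor is `det (B A)`, which is `1` when
`B A = 1`. -/

open Finset (powersetCard univ)

section MulComm

variable {R m n : Type*} [CommRing R] [Fintype m] [DecidableEq m] [Fintype n] [DecidableEq n]

theorem det_one_add_smul_mul_comm (r : R) (A : Matrix m n R) (B : Matrix n m R) :
    (1 + r • (A * B)).det = (1 + r • (B * A)).det := by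
  rw [← smul_mul, det_one_add_mul_comm, Matrix.mul_smul]

theorem sum_principal_minors_mul_comm (A : Matrix m n R) (B : Matrix n m R) (k : ℕ) :
    ∑ S ∈ powersetCard k univ, ((A * B).submatrix (Subtype.val : S → m) Subtype.val).det =
      ∑ T ∈ powersetCard k univ, ((B * A).submatrix (Subtype.val : T → n) Subtype.val).det := by
  rw [← coeff_det_one_add_X_smul_eq_sum_minors, ← coeff_det_one_add_X_smul_eq_sum_minors,
    Matrix.map_mul, Matrix.map_mul, det_one_add_smul_mul_comm]

theorem sum_principal_minors_card (M : Matrix n n R) :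
    ∑ S ∈ powersetCard (Fintype.card n) univ,
        (M.submatrix (Subtype.val : S → n) Subtype.val).det = M.det := by
  rw [← Finset.card_univ, Finset.powersetCard_self, Finset.sum_singleton]
  exact det_submatrix_equiv_self (Equiv.subtypeUnivEquiv Finset.mem_univ) M

theorem stmt9_general (A : Matrix m n R) (B : Matrix n m R) :
    ∑ S ∈ powersetCard (Fintype.card n) univ,
        ((A * B).submatrix (Subtype.val : S → m) Subtype.val).det = (B * A).det := by
  rw [sum_principal_minors_mul_comm, sum_principal_minors_card]

end MulComm

theorem det_principalSubmatrix {m k : ℕ} (K : Matrix (Fin m) (Fin m) ℂ) (S : Finset (Fin m))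
    (hS : S.card = k) :
    (principalSubmatrix K S hS).det =
      (K.submatrix (Subtype.val : S → Fin m) Subtype.val).det :=
  det_submatrix_equiv_self (S.orderIsoOfFin hS).toEquiv
    (K.submatrix (Subtype.val : S → Fin m) Subtype.val)

theorem sum_det_principalSubmatrix {m : ℕ} (K : Matrix (Fin m) (Fin m) ℂ) (k : ℕ) :
    ∑ S : {S : Finset (Fin m) // S.card = k}, (principalSubmatrix K S.1 S.2).det =
      ∑ S ∈ powersetCard k univ, (K.submatrix (Subtype.val : S → Fin m) Subtype.val).det := by
  simp only [det_principalSubmatrix]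
  exact (Finset.sum_subtype _ (fun _ => Finset.mem_powersetCard_univ)
    fun S => (K.submatrix (Subtype.val : S → Fin m) Subtype.val).det).symm

theorem stmt9 (m n : ℕ) (hn : 1 ≤ n) (hmn : n ≤ m)
    (A : Matrix (Fin m) (Fin n) ℂ) (hA : Aᴴ * A = 1) :
    ∑ S : {S : Finset (Fin m) // S.card = n},
        (principalSubmatrix (A * Aᴴ) S.1 S.2).det = 1 := by
  rw [sum_det_principalSubmatrix]
  simpa only [Fintype.card_fin, hA, det_one] using stmt9_general A Aᴴ
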